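/- Let k_p, k_o ∈ ℝ, K_v ∈ ℝ⁶ˣ⁶, and let H_c, C_c : ℝ → ℝ⁶ˣ⁶, e_v : ℝ → ℝ⁶, e_p, e_o : ℝ → ℝ³, J_l : ℝ → ℝ³ˣ³ be functions such that at time t: (i) H_c is symmetric and differentiable with e_v(t)ᵀ(H_c'(t) − 2C_c(t))e_v(t) = 0; (ii) e_v, e_p, e_o are differentiable with H_c(t)·e_v'(t) = −(C_c(t) + K_v)·e_v(t) − (k_p·e_p(t), k_o·e_o(t)); (iii) e_p'(t) equals the first three components of e_v(t) and e_o'(t) = J_l(t)·(last three components of e_v(t)); (iv) J_l(t)ᵀ·e_o(t) = e_o(t). Then the Lyapunov function L(t) := (k_p/2)‖e_p(t)‖² + (k_o/2)‖e_o(t)‖² + (1/2)·e_v(t)ᵀ·H_c(t)·e_v(t) is differentiable at t with L'(t) = −e_v(t)ᵀ·K_v·e_v(t). -/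

import Mathlib

open Matrix

/-!
For symmetric `H` the kinetic energy `½ v·(H v)` changes at the rate `v·(H v') + ½ v·(H' v)`. Along
the dynamics `H v' = -(C + K) v - f` the Coriolis power `-v·(C v)` cancels `½ v·(H' v)`, leaving
only the dissipated power `-v·(K v)` and the power `-v·f` of the feedback force `f`. The potential
energy of the position and orientation errors grows at the rate `v·f`: for the orientation error
because `e·(J ω) = (Jᵀ e)·ω = e·ω`.
-/

section ProductRules

variable {ι κ 𝕜 𝔸 : Type*} [Fintype ι] [NontriviallyNormedField 𝕜] [NormedRing 𝔸]
  [NormedAlgebra 𝕜 𝔸] {t : 𝕜}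

lemma hasDerivAt_dotProduct {u v : 𝕜 → ι → 𝔸} {u' v' : ι → 𝔸}
    (hu : HasDerivAt u u' t) (hv : HasDerivAt v v' t) :
    HasDerivAt (fun s => u s ⬝ᵥ v s) (u' ⬝ᵥ v t + u t ⬝ᵥ v') t := by
  simp only [dotProduct, ← Finset.sum_add_distrib]
  exact HasDerivAt.fun_sum fun i _ => (hasDerivAt_pi.1 hu i).mul (hasDerivAt_pi.1 hv i)

lemma hasDerivAt_mulVec [Finite κ] {A : 𝕜 → Matrix κ ι 𝔸} {A' : Matrix κ ι 𝔸}
    {v : 𝕜 → ι → 𝔸} {v' : ι → 𝔸}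
    (hA : ∀ i j, HasDerivAt (fun s => A s i j) (A' i j) t) (hv : HasDerivAt v v' t) :
    HasDerivAt (fun s => A s *ᵥ v s) (A' *ᵥ v t + A t *ᵥ v') t :=
  have := Fintype.ofFinite κ
  hasDerivAt_pi.2 fun i => hasDerivAt_dotProduct (hasDerivAt_pi.2 (hA i)) hv

end ProductRules

lemma dotProduct_append {R : Type*} [NonUnitalNonAssocSemiring R] {m n : ℕ}
    (u : Fin (m + n) → R) (v : Fin m → R) (w : Fin n → R) :
    u ⬝ᵥ Fin.append v w
      = (fun i => u (Fin.castAdd n i)) ⬝ᵥ v + (fun j => u (Fin.natAdd m j)) ⬝ᵥ w := by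
  simp only [dotProduct, Fin.sum_univ_add, Fin.append_left, Fin.append_right]

/-- Potential energy `(k/2)‖e‖²` of a tracking error `e` under a proportional gain `k`, with `‖e‖²`
encoded as the bilinear square `e ⬝ᵥ e`. -/
def potentialEnergy {ι 𝕜 : Type*} [Fintype ι] [Field 𝕜] (k : 𝕜) (e : ι → 𝕜) : 𝕜 :=
  k / 2 * (e ⬝ᵥ e)

/-- Kinetic energy `½ vᵀHv` of a generalized velocity `v` with respect to an inertia matrix `H`. -/
def kineticEnergy {ι 𝕜 : Type*} [Fintype ι] [Field 𝕜] (H : Matrix ι ι 𝕜) (v : ι → 𝕜) : 𝕜 :=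
  1 / 2 * (v ⬝ᵥ H *ᵥ v)

section Energy

variable {ι 𝕜 : Type*} [Fintype ι] [NontriviallyNormedField 𝕜] [NeZero (2 : 𝕜)] {t : 𝕜}

lemma hasDerivAt_potentialEnergy {e : 𝕜 → ι → 𝕜} {e' : ι → 𝕜} (k : 𝕜)
    (he : HasDerivAt e e' t) :
    HasDerivAt (fun s => potentialEnergy k (e s)) (k * (e t ⬝ᵥ e')) t := by
  refine ((hasDerivAt_dotProduct he he).const_mul (k / 2)).congr_deriv ?_
  rw [dotProduct_comm e', ← two_mul, ← mul_assoc, div_mul_cancel₀ k two_ne_zero]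

lemma hasDerivAt_kineticEnergy {H : 𝕜 → Matrix ι ι 𝕜} {H' : Matrix ι ι 𝕜}
    {v : 𝕜 → ι → 𝕜} {v' : ι → 𝕜} (hsymm : (H t).IsSymm)
    (hH : ∀ i j, HasDerivAt (fun s => H s i j) (H' i j) t) (hv : HasDerivAt v v' t) :
    HasDerivAt (fun s => kineticEnergy (H s) (v s))
      (v t ⬝ᵥ H t *ᵥ v' + 1 / 2 * (v t ⬝ᵥ H' *ᵥ v t)) t := by
  have hself : v' ⬝ᵥ H t *ᵥ v t = v t ⬝ᵥ H t *ᵥ v' := by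
    rw [← dotProduct_transpose_mulVec, hsymm.eq]
  refine ((hasDerivAt_dotProduct hv (hasDerivAt_mulVec hH hv)).const_mul (1 / 2)).congr_deriv ?_
  rw [hself, dotProduct_add]
  field

lemma hasDerivAt_kineticEnergy_of_dynamics {H : 𝕜 → Matrix ι ι 𝕜} {H' C K : Matrix ι ι 𝕜}
    {v : 𝕜 → ι → 𝕜} {v' f : ι → 𝕜} (hsymm : (H t).IsSymm)
    (hH : ∀ i j, HasDerivAt (fun s => H s i j) (H' i j) t)
    (hskew : v t ⬝ᵥ (H' - (2 : 𝕜) • C) *ᵥ v t = 0) (hv : HasDerivAt v v' t)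
    (hdyn : H t *ᵥ v' = -((C + K) *ᵥ v t) - f) :
    HasDerivAt (fun s => kineticEnergy (H s) (v s)) (-(v t ⬝ᵥ K *ᵥ v t) - v t ⬝ᵥ f) t := by
  have hcoriolis : 1 / 2 * (v t ⬝ᵥ H' *ᵥ v t) = v t ⬝ᵥ C *ᵥ v t := by
    rw [sub_mulVec, smul_mulVec, dotProduct_sub, dotProduct_smul, smul_eq_mul, sub_eq_zero] at hskew
    rw [hskew, one_div, inv_mul_cancel_left₀ two_ne_zero]
  refine (hasDerivAt_kineticEnergy hsymm hH hv).congr_deriv ?_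
  rw [hcoriolis, hdyn, dotProduct_sub, dotProduct_neg, add_mulVec, dotProduct_add]
  ring

lemma hasDerivAt_potentialEnergy_of_transpose_mulVec {e : 𝕜 → ι → 𝕜} {ω : ι → 𝕜}
    {J : Matrix ι ι 𝕜} (k : 𝕜) (he : HasDerivAt e (J *ᵥ ω) t) (hJ : Jᵀ *ᵥ e t = e t) :
    HasDerivAt (fun s => potentialEnergy k (e s)) (k * (e t ⬝ᵥ ω)) t := by
  refine (hasDerivAt_potentialEnergy k he).congr_deriv ?_
  rw [← dotProduct_transpose_mulVec, hJ, dotProduct_comm]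

end Energy

theorem lyapunov_derivative_general {𝕜 : Type*} [NontriviallyNormedField 𝕜] [NeZero (2 : 𝕜)]
    {m n : ℕ} (k_p k_o : 𝕜) {H_c : 𝕜 → Matrix (Fin (m + n)) (Fin (m + n)) 𝕜}
    {H' C_c K_v : Matrix (Fin (m + n)) (Fin (m + n)) 𝕜}
    {e_v : 𝕜 → Fin (m + n) → 𝕜} {ev' : Fin (m + n) → 𝕜}
    {e_p : 𝕜 → Fin m → 𝕜} {e_o : 𝕜 → Fin n → 𝕜} {J_l : Matrix (Fin n) (Fin n) 𝕜} {t : 𝕜}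
    (hsymm : (H_c t).IsSymm)
    (hH : ∀ i j, HasDerivAt (fun s => H_c s i j) (H' i j) t)
    (hskew : e_v t ⬝ᵥ (H' - (2 : 𝕜) • C_c) *ᵥ e_v t = 0)
    (hev : HasDerivAt e_v ev' t)
    (hdyn : H_c t *ᵥ ev' = -((C_c + K_v) *ᵥ e_v t) - Fin.append (k_p • e_p t) (k_o • e_o t))
    (hep : HasDerivAt e_p (fun i => e_v t (Fin.castAdd n i)) t)
    (heo : HasDerivAt e_o (J_l *ᵥ fun j => e_v t (Fin.natAdd m j)) t)
    (hJ : J_lᵀ *ᵥ e_o t = e_o t) :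
    HasDerivAt (fun s => k_p / 2 * (e_p s ⬝ᵥ e_p s) + k_o / 2 * (e_o s ⬝ᵥ e_o s)
        + 1 / 2 * (e_v s ⬝ᵥ H_c s *ᵥ e_v s))
      (-(e_v t ⬝ᵥ K_v *ᵥ e_v t)) t := by
  have hposition := hasDerivAt_potentialEnergy k_p hep
  have horientation := hasDerivAt_potentialEnergy_of_transpose_mulVec k_o heo hJ
  have hkinetic := hasDerivAt_kineticEnergy_of_dynamics hsymm hH hskew hev hdyn
  refine ((hposition.add horientation).add hkinetic).congr_deriv ?_
  rw [dotProduct_append, dotProduct_smul, dotProduct_smul, smul_eq_mul, smul_eq_mul,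
    dotProduct_comm (e_p t), dotProduct_comm (e_o t)]
  ring

/-- Under the hypotheses
(i) `H_c` symmetric and differentiable at `t` with `e_v(t)ᵀ(H_c'(t) − 2C_c(t))e_v(t) = 0`,
(ii) `e_v` differentiable at `t` with
    `H_c(t)·e_v'(t) = −(C_c(t) + K_v)·e_v(t) − (k_p·e_p(t), k_o·e_o(t))`,
(iii) `e_p'(t)` equals the first three components of `e_v(t)` and
    `e_o'(t) = J_l(t)·(last three components of e_v(t))`,
(iv) `J_l(t)ᵀ·e_o(t) = e_o(t)`,
the Lyapunov function
`L(s) = (k_p/2)‖e_p(s)‖² + (k_o/2)‖e_o(s)‖² + (1/2)·e_v(s)ᵀ·H_c(s)·e_v(s)`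
is differentiable at `t` with `L'(t) = −e_v(t)ᵀ·K_v·e_v(t)`. -/
theorem lyapunov_derivative
    (k_p k_o : ℝ) (K_v : Matrix (Fin 6) (Fin 6) ℝ)
    (H_c C_c : ℝ → Matrix (Fin 6) (Fin 6) ℝ)
    (e_v : ℝ → Fin 6 → ℝ) (e_p e_o : ℝ → Fin 3 → ℝ)
    (J_l : ℝ → Matrix (Fin 3) (Fin 3) ℝ) (t : ℝ)
    (H' : Matrix (Fin 6) (Fin 6) ℝ) (ev' : Fin 6 → ℝ)
    (hHsym : ∀ s, (H_c s)ᵀ = H_c s)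
    (hH' : ∀ i j, HasDerivAt (fun s => H_c s i j) (H' i j) t)
    (hskew : e_v t ⬝ᵥ ((H' - (2 : ℝ) • C_c t).mulVec (e_v t)) = 0)
    (hev : ∀ i, HasDerivAt (fun s => e_v s i) (ev' i) t)
    (hdyn : (H_c t).mulVec ev' = -((C_c t + K_v).mulVec (e_v t))
        - (Fin.append (k_p • e_p t) (k_o • e_o t) : Fin 6 → ℝ))
    (hep : ∀ i : Fin 3, HasDerivAt (fun s => e_p s i) (e_v t (Fin.castAdd 3 i)) t)
    (heo : ∀ i : Fin 3, HasDerivAt (fun s => e_o s i)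
        ((J_l t).mulVec (fun j : Fin 3 => e_v t (Fin.natAdd 3 j)) i) t)
    (hJ : (J_l t)ᵀ.mulVec (e_o t) = e_o t) :
    HasDerivAt (fun s => k_p / 2 * (e_p s ⬝ᵥ e_p s) + k_o / 2 * (e_o s ⬝ᵥ e_o s)
        + 1 / 2 * (e_v s ⬝ᵥ (H_c s).mulVec (e_v s)))
      (-(e_v t ⬝ᵥ K_v.mulVec (e_v t))) t :=
  lyapunov_derivative_general (m := 3) (n := 3) k_p k_o (hHsym t) hH' hskew
    (hasDerivAt_pi.2 hev) hdyn (hasDerivAt_pi.2 hep) (hasDerivAt_pi.2 heo) hJ
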